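/- arXiv:1208.5449 — 7 statements merged into one kernel-verified Lean document; each statement's English description precedes it below -/
import Mathlib

section
/- Let M be a compact metric space with metric d, μ a finite Borel measure on M, c > 1, γ ∈ (0,1], and let B = (ℕ → M) with D_c(x,y) = ∑_{k=0}^∞ d(x k, y k)/c^k. Suppose ψ, φ : B → ℝ are continuous and satisfy: |ψ(x)| ≤ K_ψ and |φ(x)| ≤ K_φ for all x, |ψ(x)−ψ(y)| ≤ H_ψ · D_c(x,y)^γ and |φ(x)−φ(y)| ≤ H_φ · D_c(x,y)^γ for all x, y. Then for all x, y ∈ B, |L_ψφ(x) − L_ψφ(y)| ≤ (μ(M) · e^{K_ψ} / c^γ) · (H_φ + K_φ · H_ψ) · D_c(x,y)^γ, where L_ψφ(x) = ∫_M e^{ψ(ax)} φ(ax) dμ(a). -/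
open MeasureTheory

/-- The sequence `ax = (a, x 0, x 1, …)`. -/
def seqCons {M : Type*} (a : M) (x : ℕ → M) : ℕ → M
  | 0 => a
  | n + 1 => x n

/-- Hölder estimate for the Ruelle operator: if `ψ, φ` are bounded by
`Kψ, Kφ` and `γ`-Hölder with constants `Hψ, Hφ` with respect to
`D_c(x,y) = ∑_k d(x k, y k)/c^k`, then
`|L_ψφ(x) − L_ψφ(y)| ≤ (μ(M) e^{Kψ}/c^γ)(Hφ + Kφ Hψ) D_c(x,y)^γ`. -/
theorem ruelle_operator_holder_estimate
    {M : Type*} [MetricSpace M] [CompactSpace M] [MeasurableSpace M] [BorelSpace M]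
    (μ : Measure M) [IsFiniteMeasure μ]
    (c γ : ℝ) (hc : 1 < c) (hγ0 : 0 < γ) (hγ1 : γ ≤ 1)
    (Dc : (ℕ → M) → (ℕ → M) → ℝ)
    (hDc : ∀ x y : ℕ → M, Dc x y = ∑' k : ℕ, dist (x k) (y k) / c ^ k)
    (ψ φ : (ℕ → M) → ℝ) (hψc : Continuous ψ) (hφc : Continuous φ)
    (Kψ Kφ Hψ Hφ : ℝ)
    (hψb : ∀ x, |ψ x| ≤ Kψ) (hφb : ∀ x, |φ x| ≤ Kφ)
    (hψH : ∀ x y, |ψ x - ψ y| ≤ Hψ * Dc x y ^ γ)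
    (hφH : ∀ x y, |φ x - φ y| ≤ Hφ * Dc x y ^ γ) :
    ∀ x y : ℕ → M,
      |(∫ a, Real.exp (ψ (seqCons a x)) * φ (seqCons a x) ∂μ) -
        ∫ a, Real.exp (ψ (seqCons a y)) * φ (seqCons a y) ∂μ| ≤
      ((μ Set.univ).toReal * Real.exp Kψ / c ^ γ) * (Hφ + Kφ * Hψ) * Dc x y ^ γ := by
  intro x y
  have hc0 : (0:ℝ) < c := by linarith
  have hsum : ∀ x y : ℕ → M, Summable (fun k : ℕ => dist (x k) (y k) / c ^ k) := by
    intro x y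
    have hg : Summable (fun k : ℕ => Metric.diam (Set.univ : Set M) * (c⁻¹) ^ k) :=
      (summable_geometric_of_lt_one (by positivity) (inv_lt_one_of_one_lt₀ hc)).mul_left _
    refine Summable.of_nonneg_of_le (fun k => by positivity) (fun k => ?_) hg
    rw [inv_pow, ← div_eq_mul_inv]
    gcongr
    exact Metric.dist_le_diam_of_mem isCompact_univ.isBounded (Set.mem_univ _) (Set.mem_univ _)
  have hD0 : 0 ≤ Dc x y := by
    rw [hDc]
    exact tsum_nonneg (fun k => by positivity)
  have hD : ∀ a, Dc (seqCons a x) (seqCons a y) = Dc x y / c := by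
    intro a
    rw [hDc, hDc, (hsum _ _).tsum_eq_zero_add, ← tsum_div_const]
    simp only [seqCons, dist_self, zero_div, zero_add]
    congr 1
    ext k
    rw [pow_succ, div_div]
  have hDγ : ∀ a, Dc (seqCons a x) (seqCons a y) ^ γ = Dc x y ^ γ / c ^ γ := by
    intro a
    rw [hD, Real.div_rpow hD0 hc0.le]
  have hcont : ∀ x : ℕ → M, Continuous (fun a : M => seqCons a x) := by
    intro x
    refine continuous_pi (fun k => ?_)
    cases k with
    | zero => exact continuous_id
    | succ n => exact continuous_const
  have hint : ∀ x : ℕ → M,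
      Integrable (fun a => Real.exp (ψ (seqCons a x)) * φ (seqCons a x)) μ := by
    intro x
    have h : Continuous (fun a => Real.exp (ψ (seqCons a x)) * φ (seqCons a x)) :=
      (Real.continuous_exp.comp (hψc.comp (hcont x))).mul (hφc.comp (hcont x))
    exact h.integrable_of_hasCompactSupport (HasCompactSupport.of_compactSpace _)
  have hexp : ∀ u v : ℝ, u ≤ Kψ → Real.exp u - Real.exp v ≤ Real.exp Kψ * |u - v| := by
    intro u v hu
    have h1 := Real.add_one_le_exp (v - u)
    have h2 : Real.exp v = Real.exp u * Real.exp (v - u) := by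
      rw [← Real.exp_add]; congr 1; ring
    calc Real.exp u - Real.exp v = Real.exp u * (1 - Real.exp (v - u)) := by rw [h2]; ring
      _ ≤ Real.exp u * |u - v| := by
        gcongr
        linarith [le_abs_self (u - v)]
      _ ≤ Real.exp Kψ * |u - v| := by gcongr
  have hexp' : ∀ u v : ℝ, u ≤ Kψ → v ≤ Kψ →
      |Real.exp u - Real.exp v| ≤ Real.exp Kψ * |u - v| := by
    intro u v hu hv
    rw [abs_le]
    have h1 := hexp u v hu
    have h2 := hexp v u hv
    rw [abs_sub_comm] at h2
    constructor <;> linarith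
  rw [← integral_sub (hint x) (hint y), ← Real.norm_eq_abs]
  have hb := norm_integral_le_of_norm_le_const (μ := μ)
    (f := fun a => Real.exp (ψ (seqCons a x)) * φ (seqCons a x)
      - Real.exp (ψ (seqCons a y)) * φ (seqCons a y))
    (C := Real.exp Kψ * (Hφ + Kφ * Hψ) * (Dc x y ^ γ / c ^ γ)) (Filter.Eventually.of_forall ?_)
  · refine hb.trans (le_of_eq ?_)
    rw [Measure.real]
    ring
  · intro a
    have h1 := hψH (seqCons a x) (seqCons a y)
    have h2 := hφH (seqCons a x) (seqCons a y)
    rw [hDγ] at h1 h2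
    have hu := (abs_le.mp (hψb (seqCons a x))).2
    have hv := (abs_le.mp (hψb (seqCons a y))).2
    have hq := hφb (seqCons a y)
    have hK : 0 ≤ Kφ := (abs_nonneg _).trans hq
    have h3 := hexp' _ _ hu hv
    have e : Real.exp (ψ (seqCons a x)) * φ (seqCons a x)
      - Real.exp (ψ (seqCons a y)) * φ (seqCons a y)
      = Real.exp (ψ (seqCons a x)) * (φ (seqCons a x) - φ (seqCons a y))
      + (Real.exp (ψ (seqCons a x)) - Real.exp (ψ (seqCons a y))) * φ (seqCons a y) := by ring
    rw [Real.norm_eq_abs, e]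
    refine (abs_add_le _ _).trans ?_
    rw [abs_mul, abs_mul, Real.abs_exp]
    have t1 : Real.exp (ψ (seqCons a x)) * |φ (seqCons a x) - φ (seqCons a y)|
        ≤ Real.exp Kψ * (Hφ * (Dc x y ^ γ / c ^ γ)) := by gcongr
    have t2 : |Real.exp (ψ (seqCons a x)) - Real.exp (ψ (seqCons a y))| * |φ (seqCons a y)|
        ≤ (Real.exp Kψ * (Hψ * (Dc x y ^ γ / c ^ γ))) * Kφ :=
      mul_le_mul (h3.trans (by gcongr)) hq (abs_nonneg _)
        (mul_nonneg (Real.exp_pos _).le ((abs_nonneg _).trans h1))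
    linarith
end

section
/- Let M be a compact metric space, μ a finite Borel measure on M, and B = (ℕ → M) with the product topology. For continuous ψ, β, φ : B → ℝ, one has the first-order Taylor estimate in the supremum norm: ‖L_{ψ+β}φ − L_ψφ − L_ψ(φ·β)‖_∞ ≤ μ(M) · e^{‖ψ‖_∞} · (e^{‖β‖_∞} − 1 − ‖β‖_∞) · ‖φ‖_∞. -/
open MeasureTheory

theorem taylor_aux {t b : ℝ} (h : |t| ≤ b) :
    |Real.exp t - 1 - t| ≤ Real.exp b - 1 - b := by
  have h1 : |Real.exp t - 1 - t| ≤ Real.exp |t| - 1 - |t| := by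
    have h0 := Real.add_one_le_exp t
    rw [abs_of_nonneg (by linarith)]
    rcases le_total 0 t with ht | ht
    · rw [abs_of_nonneg ht]
    · rw [abs_of_nonpos ht]
      have h2 := Real.self_le_sinh_iff.2 (neg_nonneg.2 ht)
      rw [Real.sinh_eq, neg_neg] at h2
      linarith
  have h3 : Real.exp b = Real.exp |t| * Real.exp (b - |t|) := by
    rw [← Real.exp_add]; congr 1; ring
  have h4 := Real.add_one_le_exp (b - |t|)
  have h5 := Real.one_le_exp (abs_nonneg t)
  nlinarith

theorem continuous_seqCons_left {M : Type*} [TopologicalSpace M] (x : ℕ → M) :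
    Continuous (fun a : M => seqCons a x) := by
  refine continuous_pi fun n => ?_
  cases n with
  | zero => exact continuous_id
  | succ n => exact continuous_const

/-- First-order Taylor estimate for the Ruelle operator in the sup norm:
`‖L_{ψ+β}φ − L_ψφ − L_ψ(φ·β)‖_∞ ≤ μ(M) e^{‖ψ‖_∞} (e^{‖β‖_∞} − 1 − ‖β‖_∞) ‖φ‖_∞`. -/
theorem ruelle_operator_first_order_taylor
    {M : Type*} [MetricSpace M] [CompactSpace M] [MeasurableSpace M] [BorelSpace M]
    (μ : Measure M) [IsFiniteMeasure μ]
    (ψ β φ : C(ℕ → M, ℝ)) :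
    ∀ x : ℕ → M,
      |(∫ a, Real.exp (ψ (seqCons a x) + β (seqCons a x)) * φ (seqCons a x) ∂μ) -
        (∫ a, Real.exp (ψ (seqCons a x)) * φ (seqCons a x) ∂μ) -
        (∫ a, Real.exp (ψ (seqCons a x)) * φ (seqCons a x) * β (seqCons a x) ∂μ)| ≤
      (μ Set.univ).toReal * Real.exp ‖ψ‖ * (Real.exp ‖β‖ - 1 - ‖β‖) * ‖φ‖ := by
  intro x
  have hc := continuous_seqCons_left x
  have hψ : Continuous fun a => ψ (seqCons a x) := ψ.continuous.comp hc
  have hβ : Continuous fun a => β (seqCons a x) := β.continuous.comp hc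
  have hφ : Continuous fun a => φ (seqCons a x) := φ.continuous.comp hc
  have hint : ∀ f : M → ℝ, Continuous f → Integrable f μ := fun f hf =>
    hf.integrable_of_hasCompactSupport (HasCompactSupport.of_compactSpace f)
  have i1 : Integrable (fun a => Real.exp (ψ (seqCons a x) + β (seqCons a x)) * φ (seqCons a x)) μ :=
    hint _ (((hψ.add hβ).rexp).mul hφ)
  have i2 : Integrable (fun a => Real.exp (ψ (seqCons a x)) * φ (seqCons a x)) μ :=
    hint _ (hψ.rexp.mul hφ)
  have i3 : Integrable (fun a => Real.exp (ψ (seqCons a x)) * φ (seqCons a x) * β (seqCons a x)) μ :=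
    hint _ ((hψ.rexp.mul hφ).mul hβ)
  rw [← integral_sub i1 i2, ← integral_sub (by exact i1.sub i2) i3, ← Real.norm_eq_abs]
  refine (norm_integral_le_of_norm_le_const
    (C := Real.exp ‖ψ‖ * (Real.exp ‖β‖ - 1 - ‖β‖) * ‖φ‖)
    (Filter.Eventually.of_forall fun a => ?_)).trans (le_of_eq ?_)
  · have e : Real.exp (ψ (seqCons a x) + β (seqCons a x)) * φ (seqCons a x) -
        Real.exp (ψ (seqCons a x)) * φ (seqCons a x) -
        Real.exp (ψ (seqCons a x)) * φ (seqCons a x) * β (seqCons a x) =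
        Real.exp (ψ (seqCons a x)) *
          (Real.exp (β (seqCons a x)) - 1 - β (seqCons a x)) * φ (seqCons a x) := by
      rw [Real.exp_add]; ring
    have hb := taylor_aux (β.norm_coe_le_norm (seqCons a x))
    have hp : Real.exp (ψ (seqCons a x)) ≤ Real.exp ‖ψ‖ :=
      Real.exp_le_exp.2 ((le_abs_self _).trans (ψ.norm_coe_le_norm (seqCons a x)))
    have hf := φ.norm_coe_le_norm (seqCons a x)
    have hb0 := (abs_nonneg _).trans hb
    rw [e, norm_mul, norm_mul, Real.norm_eq_abs (Real.exp _), Real.abs_exp]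
    rw [← Real.norm_eq_abs] at hb
    gcongr
  · simp only [Measure.real]; ring
end

section
/- Let M be a compact metric space, μ a finite Borel measure on M, B = (ℕ → M) with the product topology, and C(B,ℝ) the Banach space of continuous real-valued functions on B with the supremum norm. Let Θ : C(B,ℝ) → (C(B,ℝ) →L C(B,ℝ)) be the map satisfying (Θ(ψ)φ)(x) = ∫_M e^{ψ(ax)} φ(ax) dμ(a) for all ψ, φ ∈ C(B,ℝ) and x ∈ B. Then for every ψ ∈ C(B,ℝ), Θ is Fréchet differentiable at ψ, and its Fréchet derivative is the continuous linear map sending β ∈ C(B,ℝ) to the operator φ ↦ Θ(ψ)(φ·β), i.e. (DΘ(ψ)(β)φ)(x) = ∫_M e^{ψ(ax)} φ(ax) β(ax) dμ(a). -/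
open MeasureTheory

/-- The map `Θ` sending `ψ ∈ C(B,ℝ)` to the Ruelle operator `L_ψ` is
Fréchet differentiable at every `ψ`, with derivative
`β ↦ (φ ↦ L_ψ(φ·β))`, i.e. `(DΘ(ψ)(β)φ)(x) = ∫ e^{ψ(ax)} φ(ax) β(ax) dμ(a)`. -/
theorem ruelle_operator_frechet_differentiable
    {M : Type*} [MetricSpace M] [CompactSpace M] [MeasurableSpace M] [BorelSpace M]
    (μ : Measure M) [IsFiniteMeasure μ]
    (Θ : C(ℕ → M, ℝ) → C(ℕ → M, ℝ) →L[ℝ] C(ℕ → M, ℝ))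
    (hΘ : ∀ ψ φ : C(ℕ → M, ℝ), ∀ x : ℕ → M,
      Θ ψ φ x = ∫ a, Real.exp (ψ (seqCons a x)) * φ (seqCons a x) ∂μ)
    (ψ : C(ℕ → M, ℝ)) :
    ∃ D : C(ℕ → M, ℝ) →L[ℝ] C(ℕ → M, ℝ) →L[ℝ] C(ℕ → M, ℝ),
      HasFDerivAt Θ D ψ ∧
      ∀ β φ : C(ℕ → M, ℝ), ∀ x : ℕ → M,
        D β φ x = ∫ a, Real.exp (ψ (seqCons a x)) * φ (seqCons a x) * β (seqCons a x) ∂μ := by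
  have hexp : ∀ (f : C(ℕ → M, ℝ)) (y : ℕ → M), (NormedSpace.exp f) y = Real.exp (f y) := by
    intro f y
    have h := NormedSpace.map_exp_of_mem_ball (𝕂 := ℝ) (ContinuousMap.evalAlgHom ℝ ℝ y : C(ℕ → M, ℝ) →ₐ[ℝ] ℝ)
      (continuous_eval_const y) f
      ((NormedSpace.expSeries_radius_eq_top ℝ C(ℕ → M, ℝ)).symm ▸ edist_lt_top _ _)
    rw [Real.exp_eq_exp_ℝ]
    exact h
  let T : C(ℕ → M, ℝ) →L[ℝ] C(ℕ → M, ℝ) →L[ℝ] C(ℕ → M, ℝ) :=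
    (ContinuousLinearMap.compL ℝ C(ℕ → M, ℝ) C(ℕ → M, ℝ) C(ℕ → M, ℝ) (Θ 0)).comp
      (ContinuousLinearMap.mul ℝ C(ℕ → M, ℝ))
  have hT : ∀ f φ, T f φ = Θ 0 (f * φ) := fun f φ => rfl
  have hΘT : Θ = fun f => T (NormedSpace.exp f) := by
    funext f
    ext φ x
    rw [hT, hΘ, hΘ]
    simp [hexp]
  have hd : HasFDerivAt Θ (T.comp (NormedSpace.exp ψ •
      (1 : C(ℕ → M, ℝ) →L[ℝ] C(ℕ → M, ℝ)))) ψ := by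
    have h1 : HasFDerivAt (NormedSpace.exp : C(ℕ → M, ℝ) → C(ℕ → M, ℝ)) (NormedSpace.exp ψ •
      (1 : C(ℕ → M, ℝ) →L[ℝ] C(ℕ → M, ℝ))) ψ := hasFDerivAt_exp
    have h2 : HasFDerivAt T T (NormedSpace.exp ψ) := T.hasFDerivAt
    have := HasFDerivAt.comp (𝕜 := ℝ) (E := C(ℕ → M, ℝ)) (F := C(ℕ → M, ℝ))
      (G := C(ℕ → M, ℝ) →L[ℝ] C(ℕ → M, ℝ)) (g := T) (g' := T) ψ h2 h1
    rw [hΘT]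
    exact this
  refine ⟨_, hd, fun β φ x => ?_⟩
  have : (T.comp (NormedSpace.exp ψ •
      (1 : C(ℕ → M, ℝ) →L[ℝ] C(ℕ → M, ℝ)))) β φ = Θ 0 ((NormedSpace.exp ψ * β) * φ) := rfl
  rw [this, hΘ]
  congr 1
  funext a
  simp [hexp]
  ring
end

section
/- Let M be a compact metric space, μ a finite Borel measure on M, B = (ℕ → M) with the product topology, and C(B,ℝ) the Banach space of continuous real-valued functions on B with the supremum norm. Let V denote the Banach space of bounded linear operators on C(B,ℝ) with the operator norm, and let Θ : C(B,ℝ) → V be the map satisfying (Θ(ψ)φ)(x) = ∫_M e^{ψ(ax)} φ(ax) dμ(a) for all ψ, φ ∈ C(B,ℝ) and x ∈ B. Then Θ is (real-)analytic on all of C(B,ℝ): at every ψ ∈ C(B,ℝ), Θ is given in a neighborhood of ψ by its convergent Taylor series Θ(ψ+β) = Θ(ψ) + ∑_{n=1}^∞ (1/n!)·[φ ↦ Θ(ψ)(φ·βⁿ)]. -/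
open MeasureTheory

/-- The map `Θ : C(B,ℝ) → V`, `ψ ↦ L_ψ`, is real-analytic on all of
`C(B,ℝ)`: it is analytic at every `ψ`, and around every `ψ` it is given by its
convergent Taylor series `Θ(ψ+β) = Θ(ψ) + ∑_{n=1}^∞ (1/n!)·[φ ↦ Θ(ψ)(φ·βⁿ)]`. -/
theorem ruelle_operator_analytic
    {M : Type*} [MetricSpace M] [CompactSpace M] [MeasurableSpace M] [BorelSpace M]
    (μ : Measure M) [IsFiniteMeasure μ]
    (Θ : C(ℕ → M, ℝ) → C(ℕ → M, ℝ) →L[ℝ] C(ℕ → M, ℝ))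
    (hΘ : ∀ ψ φ : C(ℕ → M, ℝ), ∀ x : ℕ → M,
      Θ ψ φ x = ∫ a, Real.exp (ψ (seqCons a x)) * φ (seqCons a x) ∂μ) :
    (∀ ψ : C(ℕ → M, ℝ), AnalyticAt ℝ Θ ψ) ∧
    ∀ ψ β : C(ℕ → M, ℝ),
      HasSum (fun n : ℕ => ((n + 1).factorial : ℝ)⁻¹ •
          ((Θ ψ).comp ((ContinuousLinearMap.mul ℝ (C(ℕ → M, ℝ))).flip (β ^ (n + 1)))))
        (Θ (ψ + β) - Θ ψ) := by
  have hexp : ∀ (ψ : C(ℕ → M, ℝ)) (y : ℕ → M),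
      (NormedSpace.exp ψ) y = Real.exp (ψ y) := by
    intro ψ y
    have h1 := (ContinuousMap.evalCLM ℝ y).hasSum
      (NormedSpace.exp_series_hasSum_exp' (𝕂 := ℝ) ψ)
    have h2 := NormedSpace.exp_series_hasSum_exp' (𝕂 := ℝ) (ψ y)
    rw [← Real.exp_eq_exp_ℝ] at h2
    refine HasSum.unique h1 ?_
    simpa using h2
  have hT : ∀ ψ : C(ℕ → M, ℝ), Θ ψ =
      (Θ 0).comp ((ContinuousLinearMap.mul ℝ (C(ℕ → M, ℝ))).flip (NormedSpace.exp ψ)) := by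
    intro ψ
    ext φ x
    simp [hΘ, hexp, mul_comm]
  let T : C(ℕ → M, ℝ) →L[ℝ] (C(ℕ → M, ℝ) →L[ℝ] C(ℕ → M, ℝ)) :=
    (ContinuousLinearMap.compL ℝ _ _ _ (Θ 0)).comp (ContinuousLinearMap.mul ℝ (C(ℕ → M, ℝ))).flip
  have hT' : Θ = fun ψ => T (NormedSpace.exp ψ) := funext hT
  refine ⟨fun ψ => ?_, fun ψ β => ?_⟩
  · rw [hT']
    have hA : AnalyticAt ℝ (fun y => T y) (NormedSpace.exp ψ) :=
      ContinuousLinearMap.analyticAt (𝕜 := ℝ) (E := C(ℕ → M, ℝ))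
        (F := C(ℕ → M, ℝ) →L[ℝ] C(ℕ → M, ℝ)) T _
    have hB : AnalyticAt ℝ (NormedSpace.exp : C(ℕ → M, ℝ) → C(ℕ → M, ℝ)) ψ :=
      NormedSpace.exp_analytic (𝕂 := ℝ) ψ
    exact AnalyticAt.comp hA hB
  · have h0 := NormedSpace.exp_series_hasSum_exp' (𝕂 := ℝ) β
    have h1 := (hasSum_nat_add_iff' 1).2 h0
    have h2 := T.hasSum (h1.mul_left (NormedSpace.exp ψ))
    have e : T (NormedSpace.exp ψ * (NormedSpace.exp β -
        ∑ i ∈ Finset.range 1, ((i.factorial : ℝ)⁻¹) • β ^ i)) = Θ (ψ + β) - Θ ψ := by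
      rw [hT', ← map_sub]
      congr 1
      rw [NormedSpace.exp_add_of_commute (Commute.all ψ β)]
      simp [mul_sub]
    rw [e] at h2
    convert h2 using 2 with n
    rw [hT ψ]
    ext φ x
    simp [T, hΘ]
    left
    congr 1
    ext a
    ring
end

section
/- Let M be a compact metric space, μ a finite Borel measure on M, A : M × M → ℝ continuous, I ⊆ ℝ closed, with A sectionally trivial on I (the map m ↦ s(m) = {a ∈ M : A(a,m) ∈ I} is locally constant on M). For continuous ψ, φ : B(A,I) → ℝ (with B(A,I) carrying the subspace topology from the product topology), define the generalized Ruelle operator (L_ψφ)(x) = ∫_{s(x 0)} e^{ψ(ax)} φ(ax) dμ(a) for x ∈ B(A,I). Then L_ψφ is a continuous function on B(A,I), and sup_{x ∈ B(A,I)} |L_ψφ(x)| ≤ μ(M) · e^{‖ψ‖_∞} · ‖φ‖_∞; hence φ ↦ L_ψφ is a bounded linear operator on C(B(A,I),ℝ) with the supremum norm. -/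
open MeasureTheory
open scoped Classical

/-- For `x ∈ B(A,I)` and `a ∈ s(x 0)`, the sequence `ax` as an element of `B(A,I)`. -/
def consMem {M : Type*} (A : M × M → ℝ) (I : Set ℝ)
    (x : {z : ℕ → M // ∀ k : ℕ, A (z k, z (k + 1)) ∈ I}) (a : M)
    (ha : A (a, x.1 0) ∈ I) : {z : ℕ → M // ∀ k : ℕ, A (z k, z (k + 1)) ∈ I} :=
  ⟨seqCons a x.1, by
    intro k
    cases k with
    | zero => exact ha
    | succ n => exact x.2 n⟩


section RuelleHelpers

variable {M : Type*}

noncomputable def ruelleF [TopologicalSpace M] (A : M × M → ℝ) (I : Set ℝ)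
    (ψ φ : C({z : ℕ → M // ∀ k : ℕ, A (z k, z (k + 1)) ∈ I}, ℝ))
    (x : {z : ℕ → M // ∀ k : ℕ, A (z k, z (k + 1)) ∈ I}) (a : M) : ℝ :=
  if ha : A (a, x.1 0) ∈ I then
    Real.exp (ψ (consMem A I x a ha)) * φ (consMem A I x a ha) else 0

theorem ruelle_cont_cons [TopologicalSpace M] {Y : Type*} [TopologicalSpace Y]
    (A : M × M → ℝ) (I : Set ℝ)
    (f : Y → {z : ℕ → M // ∀ k : ℕ, A (z k, z (k + 1)) ∈ I}) (g : Y → M)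
    (hf : Continuous f) (hg : Continuous g) (h : ∀ y, A (g y, (f y).1 0) ∈ I) :
    Continuous (fun y => consMem A I (f y) (g y) (h y)) := by
  refine Continuous.subtype_mk (continuous_pi fun n => ?_) _
  cases n with
  | zero => exact hg
  | succ n => exact (continuous_apply n).comp (continuous_subtype_val.comp hf)

theorem ruelleF_bound [TopologicalSpace M] (A : M × M → ℝ) (I : Set ℝ)
    [CompactSpace {z : ℕ → M // ∀ k : ℕ, A (z k, z (k + 1)) ∈ I}]
    (ψ φ : C({z : ℕ → M // ∀ k : ℕ, A (z k, z (k + 1)) ∈ I}, ℝ))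
    (x : {z : ℕ → M // ∀ k : ℕ, A (z k, z (k + 1)) ∈ I}) (a : M) :
    ‖ruelleF A I ψ φ x a‖ ≤ Real.exp ‖ψ‖ * ‖φ‖ := by
  unfold ruelleF
  split_ifs with ha
  · rw [norm_mul, Real.norm_eq_abs, Real.abs_exp]
    have h1 := ψ.norm_coe_le_norm (consMem A I x a ha)
    have h2 := φ.norm_coe_le_norm (consMem A I x a ha)
    have h3 := (le_abs_self _).trans h1
    gcongr
  · rw [norm_zero]; positivity

theorem ruelleF_meas [TopologicalSpace M] [MeasurableSpace M] [BorelSpace M]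
    (A : M × M → ℝ) (hA : Continuous A) (I : Set ℝ) (hI : IsClosed I)
    (ψ φ : C({z : ℕ → M // ∀ k : ℕ, A (z k, z (k + 1)) ∈ I}, ℝ))
    (x : {z : ℕ → M // ∀ k : ℕ, A (z k, z (k + 1)) ∈ I}) :
    Measurable (ruelleF A I ψ φ x) := by
  have hs : IsClosed {a : M | A (a, x.1 0) ∈ I} :=
    hI.preimage (hA.comp (by fun_prop : Continuous fun a : M => (a, x.1 0)))
  refine measurable_of_restrict_of_restrict_compl hs.measurableSet ?_ ?_
  · have hc := ruelle_cont_cons A I (fun _ : {a : M | A (a, x.1 0) ∈ I} => x) (fun a => a.1)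
      continuous_const continuous_subtype_val (fun a => a.2)
    have : Set.domRestrict {a : M | A (a, x.1 0) ∈ I} (ruelleF A I ψ φ x) =
        fun a => Real.exp (ψ (consMem A I x a.1 a.2)) * φ (consMem A I x a.1 a.2) := by
      funext a
      exact dif_pos a.2
    rw [this]
    exact ((Real.continuous_exp.comp (ψ.continuous.comp hc)).mul
      (φ.continuous.comp hc)).measurable
  · have : Set.domRestrict {a : M | A (a, x.1 0) ∈ I}ᶜ (ruelleF A I ψ φ x) = fun _ => 0 := by
      funext a
      exact dif_neg a.2
    rw [this]
    exact measurable_const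

theorem ruelleF_cont [MetricSpace M]
    (A : M × M → ℝ) (I : Set ℝ)
    (hsec : ∀ m : M, ∃ ε > (0 : ℝ), ∀ m' : M, dist m m' < ε →
      {a : M | A (a, m') ∈ I} = {a : M | A (a, m) ∈ I})
    (ψ φ : C({z : ℕ → M // ∀ k : ℕ, A (z k, z (k + 1)) ∈ I}, ℝ)) (a : M) :
    Continuous (fun x => ruelleF A I ψ φ x a) := by
  rw [continuous_iff_continuousAt]
  intro x
  have hev : ∀ᶠ y : {z : ℕ → M // ∀ k : ℕ, A (z k, z (k + 1)) ∈ I} in nhds x,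
      (A (a, y.1 0) ∈ I ↔ A (a, x.1 0) ∈ I) := by
    obtain ⟨ε, hε, h⟩ := hsec (x.1 0)
    have hc : Continuous fun y : {z : ℕ → M // ∀ k : ℕ, A (z k, z (k + 1)) ∈ I} => y.1 0 :=
      (continuous_apply 0).comp continuous_subtype_val
    filter_upwards [hc.continuousAt.eventually (Metric.ball_mem_nhds (x.1 0) hε)] with y hy
    have hy' : dist (x.1 0) (y.1 0) < ε := by rw [dist_comm]; exact hy
    exact Set.ext_iff.mp (h _ hy') a
  by_cases hx : A (a, x.1 0) ∈ I
  · have hU : {y : {z : ℕ → M // ∀ k : ℕ, A (z k, z (k + 1)) ∈ I} | A (a, y.1 0) ∈ I} ∈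
        nhds x := by
      filter_upwards [hev] with y hy using hy.2 hx
    refine ContinuousOn.continuousAt ?_ hU
    rw [continuousOn_iff_continuous_domRestrict]
    have hc := ruelle_cont_cons A I
      (fun y : {y : {z : ℕ → M // ∀ k : ℕ, A (z k, z (k + 1)) ∈ I} | A (a, y.1 0) ∈ I} => y.1)
      (fun _ => a) continuous_subtype_val continuous_const (fun y => y.2)
    refine ((Real.continuous_exp.comp (ψ.continuous.comp hc)).mul
      (φ.continuous.comp hc)).congr ?_
    intro y
    show _ = ruelleF A I ψ φ y.1 a
    unfold ruelleF
    have hy : A (a, y.1.1 0) ∈ I := y.2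
    rw [dif_pos hy]
    rfl
  · refine (continuousAt_const (y := (0 : ℝ))).congr ?_
    filter_upwards [hev] with y hy
    unfold ruelleF
    rw [dif_neg (fun h => hx (hy.1 h))]

theorem ruelle_int_eq [TopologicalSpace M] [MeasurableSpace M] (μ : Measure M)
    (A : M × M → ℝ) (I : Set ℝ)
    (ψ φ : C({z : ℕ → M // ∀ k : ℕ, A (z k, z (k + 1)) ∈ I}, ℝ))
    (x : {z : ℕ → M // ∀ k : ℕ, A (z k, z (k + 1)) ∈ I}) :
    ∫ a in {a : M | A (a, x.1 0) ∈ I},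
        (if ha : A (a, x.1 0) ∈ I then
          Real.exp (ψ (consMem A I x a ha)) * φ (consMem A I x a ha) else 0) ∂μ =
      ∫ a, ruelleF A I ψ φ x a ∂μ :=
  setIntegral_eq_integral_of_forall_compl_eq_zero fun _ ha => dif_neg ha

end RuelleHelpers

/-- The generalized Ruelle operator
`(L_ψφ)(x) = ∫_{s(x 0)} e^{ψ(ax)} φ(ax) dμ(a)` on `B(A,I)` (with `A` sectionally
trivial on `I`) takes continuous functions to continuous functions, satisfies
`‖L_ψφ‖_∞ ≤ μ(M) e^{‖ψ‖_∞} ‖φ‖_∞`, and defines a bounded linear operator on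
`C(B(A,I), ℝ)` with the supremum norm. -/
theorem generalized_ruelle_operator_bounded
    {M : Type*} [MetricSpace M] [CompactSpace M] [MeasurableSpace M] [BorelSpace M]
    (μ : Measure M) [IsFiniteMeasure μ]
    (A : M × M → ℝ) (hA : Continuous A) (I : Set ℝ) (hI : IsClosed I)
    (hsec : ∀ m : M, ∃ ε > (0 : ℝ), ∀ m' : M, dist m m' < ε →
      {a : M | A (a, m') ∈ I} = {a : M | A (a, m) ∈ I})
    [CompactSpace {z : ℕ → M // ∀ k : ℕ, A (z k, z (k + 1)) ∈ I}]
    (ψ φ : C({z : ℕ → M // ∀ k : ℕ, A (z k, z (k + 1)) ∈ I}, ℝ)) :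
    Continuous (fun x : {z : ℕ → M // ∀ k : ℕ, A (z k, z (k + 1)) ∈ I} =>
      ∫ a in {a : M | A (a, x.1 0) ∈ I},
        (if ha : A (a, x.1 0) ∈ I then
          Real.exp (ψ (consMem A I x a ha)) * φ (consMem A I x a ha) else 0) ∂μ) ∧
    (∀ x : {z : ℕ → M // ∀ k : ℕ, A (z k, z (k + 1)) ∈ I},
      |∫ a in {a : M | A (a, x.1 0) ∈ I},
        (if ha : A (a, x.1 0) ∈ I then
          Real.exp (ψ (consMem A I x a ha)) * φ (consMem A I x a ha) else 0) ∂μ| ≤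
      (μ Set.univ).toReal * Real.exp ‖ψ‖ * ‖φ‖) ∧
    ∃ T : C({z : ℕ → M // ∀ k : ℕ, A (z k, z (k + 1)) ∈ I}, ℝ) →L[ℝ]
        C({z : ℕ → M // ∀ k : ℕ, A (z k, z (k + 1)) ∈ I}, ℝ),
      ∀ φ' : C({z : ℕ → M // ∀ k : ℕ, A (z k, z (k + 1)) ∈ I}, ℝ),
        ∀ x : {z : ℕ → M // ∀ k : ℕ, A (z k, z (k + 1)) ∈ I},
          T φ' x = ∫ a in {a : M | A (a, x.1 0) ∈ I},
            (if ha : A (a, x.1 0) ∈ I then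
              Real.exp (ψ (consMem A I x a ha)) * φ' (consMem A I x a ha) else 0) ∂μ := by
  simp only [ruelle_int_eq]
  haveI : FirstCountableTopology {z : ℕ → M // ∀ k : ℕ, A (z k, z (k + 1)) ∈ I} :=
    Topology.IsInducing.subtypeVal.firstCountableTopology
  have hint : ∀ φ x, Integrable (ruelleF A I ψ φ x) μ := fun φ x =>
    Integrable.of_bound (ruelleF_meas A hA I hI ψ φ x).aestronglyMeasurable _
      (Filter.Eventually.of_forall (ruelleF_bound A I ψ φ x))
  have hcont : ∀ φ, Continuous (fun x => ∫ a, ruelleF A I ψ φ x a ∂μ) := fun φ =>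
    continuous_of_dominated (bound := fun _ => Real.exp ‖ψ‖ * ‖φ‖)
      (fun x => (ruelleF_meas A hA I hI ψ φ x).aestronglyMeasurable)
      (fun x => Filter.Eventually.of_forall (ruelleF_bound A I ψ φ x))
      (integrable_const _)
      (Filter.Eventually.of_forall (ruelleF_cont A I hsec ψ φ))
  have hbd : ∀ φ x, |∫ a, ruelleF A I ψ φ x a ∂μ| ≤
      (μ Set.univ).toReal * Real.exp ‖ψ‖ * ‖φ‖ := by
    intro φ x
    have := norm_integral_le_of_norm_le_const (μ := μ)
      (Filter.Eventually.of_forall (ruelleF_bound A I ψ φ x))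
    rw [Real.norm_eq_abs, Measure.real] at this
    linarith
  refine ⟨hcont φ, hbd φ, ?_⟩
  refine ⟨LinearMap.mkContinuous
    { toFun := fun φ => ⟨fun x => ∫ a, ruelleF A I ψ φ x a ∂μ, hcont φ⟩
      map_add' := ?_
      map_smul' := ?_ } ((μ Set.univ).toReal * Real.exp ‖ψ‖) ?_, ?_⟩
  · intro f g
    ext x
    simp only [ContinuousMap.coe_mk, ContinuousMap.add_apply]
    rw [← integral_add (hint f x) (hint g x)]
    congr 1
    funext a
    unfold ruelleF
    split_ifs
    · simp [mul_add]
    · simp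
  · intro c f
    ext x
    simp only [ContinuousMap.coe_mk, ContinuousMap.smul_apply, RingHom.id_apply, smul_eq_mul]
    rw [← integral_const_mul]
    congr 1
    funext a
    unfold ruelleF
    split_ifs
    · simp [mul_left_comm]
    · simp
  · intro f
    refine (ContinuousMap.norm_le _ (by positivity)).2 fun x => ?_
    exact hbd f x
  · intro f x
    rfl
end

section
/- Let M be a compact metric space, μ a finite Borel measure on M, A : M × M → ℝ continuous, I ⊆ ℝ closed, with A sectionally trivial on I (the map m ↦ s(m) = {a ∈ M : A(a,m) ∈ I} is locally constant on M). Let C(B(A,I),ℝ) be the Banach space of continuous real-valued functions on the compact space B(A,I) with the supremum norm, let V̇ be the Banach space of bounded linear operators on C(B(A,I),ℝ) with the operator norm, and let Θ̇ : C(B(A,I),ℝ) → V̇ be the map satisfying (Θ̇(ψ)φ)(x) = ∫_{s(x 0)} e^{ψ(ax)} φ(ax) dμ(a) for all ψ, φ ∈ C(B(A,I),ℝ) and x ∈ B(A,I). Then Θ̇ is (real-)analytic on all of C(B(A,I),ℝ): at every ψ it is given in a neighborhood of ψ by its convergent Taylor series Θ̇(ψ+β) = Θ̇(ψ) + ∑_{n=1}^∞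 (1/n!)·[φ ↦ Θ̇(ψ)(φ·βⁿ)]. -/
open MeasureTheory
open scoped Classical

theorem ruelle_exp_apply {X : Type*} [TopologicalSpace X] [CompactSpace X] (β : C(X, ℝ)) (x : X) :
    (NormedSpace.exp β) x = Real.exp (β x) := by
  have h := NormedSpace.map_exp (ContinuousMap.evalAlgHom ℝ ℝ x)
    (continuous_eval_const x) β
  rw [Real.exp_eq_exp_ℝ]
  exact h

theorem ruelle_abstract {𝔸 : Type*} [NormedCommRing 𝔸] [NormedAlgebra ℝ 𝔸] [CompleteSpace 𝔸]
    (Θ : 𝔸 → 𝔸 →L[ℝ] 𝔸)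
    (key : ∀ ψ β, Θ (ψ + β) =
      (Θ ψ).comp ((ContinuousLinearMap.mul ℝ 𝔸).flip (NormedSpace.exp β))) :
    (∀ ψ, AnalyticAt ℝ Θ ψ) ∧
    ∀ ψ β, HasSum (fun n : ℕ => ((n + 1).factorial : ℝ)⁻¹ •
      ((Θ ψ).comp ((ContinuousLinearMap.mul ℝ 𝔸).flip (β ^ (n + 1)))))
      (Θ (ψ + β) - Θ ψ) := by
  refine ⟨fun ψ => ?_, fun ψ β => ?_⟩
  · let L := (ContinuousLinearMap.compL ℝ
      𝔸 𝔸 𝔸 (Θ 0)).comp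
      (ContinuousLinearMap.mul ℝ
        𝔸).flip
    have hL : Θ = fun ψ => L (NormedSpace.exp ψ) := by
      funext ψ
      have := key 0 ψ
      rw [zero_add] at this
      exact this
    rw [hL]
    have h1 : AnalyticAt ℝ (fun f => L f) (NormedSpace.exp ψ) :=
      ContinuousLinearMap.analyticAt (𝕜 := ℝ) L _
    have h2 : AnalyticAt ℝ (NormedSpace.exp :
        𝔸 → _) ψ :=
      NormedSpace.exp_analytic ψ
    exact h1.comp h2
  · let L := (ContinuousLinearMap.compL ℝ
      𝔸 𝔸 𝔸 (Θ ψ)).comp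
      (ContinuousLinearMap.mul ℝ
        𝔸).flip
    have h1 := L.hasSum (NormedSpace.exp_series_hasSum_exp' (𝕂 := ℝ) β)
    have h2 := (hasSum_nat_add_iff' 1).mpr h1
    have e0 : Θ ψ = L 1 := by
      ext φ
      simp [L]
    have e1 : Θ (ψ + β) = L (NormedSpace.exp β) := key ψ β
    rw [e1]
    have e2 : L (NormedSpace.exp β) - Θ ψ = L (NormedSpace.exp β) -
        ∑ i ∈ Finset.range 1, L (((i.factorial : ℝ))⁻¹ • β ^ i) := by
      simp [← e0]
    rw [e2]
    have e3 : (fun n : ℕ => L (((n + 1).factorial : ℝ)⁻¹ • β ^ (n + 1))) =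
        fun n : ℕ => ((n + 1).factorial : ℝ)⁻¹ •
          ((Θ ψ).comp ((ContinuousLinearMap.mul ℝ 𝔸).flip (β ^ (n + 1)))) := by
      funext n
      rw [map_smul]
      rfl
    rw [e3] at h2
    exact h2

/-- The map `Θ̇` sending `ψ ∈ C(B(A,I),ℝ)` to the generalized Ruelle
operator `(L_ψφ)(x) = ∫_{s(x 0)} e^{ψ(ax)} φ(ax) dμ(a)` (with `A` sectionally trivial on
`I`) is real-analytic on all of `C(B(A,I),ℝ)`: it is analytic at every `ψ` and is given
around every `ψ` by its convergent Taylor series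
`Θ̇(ψ+β) = Θ̇(ψ) + ∑_{n=1}^∞ (1/n!)·[φ ↦ Θ̇(ψ)(φ·βⁿ)]`. -/
theorem generalized_ruelle_operator_analytic
    {M : Type*} [MetricSpace M] [CompactSpace M] [MeasurableSpace M] [BorelSpace M]
    (μ : Measure M) [IsFiniteMeasure μ]
    (A : M × M → ℝ) (hA : Continuous A) (I : Set ℝ) (hI : IsClosed I)
    (hsec : ∀ m : M, ∃ ε > (0 : ℝ), ∀ m' : M, dist m m' < ε →
      {a : M | A (a, m') ∈ I} = {a : M | A (a, m) ∈ I})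
    [CompactSpace {z : ℕ → M // ∀ k : ℕ, A (z k, z (k + 1)) ∈ I}]
    (Θ : C({z : ℕ → M // ∀ k : ℕ, A (z k, z (k + 1)) ∈ I}, ℝ) →
      C({z : ℕ → M // ∀ k : ℕ, A (z k, z (k + 1)) ∈ I}, ℝ) →L[ℝ]
        C({z : ℕ → M // ∀ k : ℕ, A (z k, z (k + 1)) ∈ I}, ℝ))
    (hΘ : ∀ ψ φ : C({z : ℕ → M // ∀ k : ℕ, A (z k, z (k + 1)) ∈ I}, ℝ),
      ∀ x : {z : ℕ → M // ∀ k : ℕ, A (z k, z (k + 1)) ∈ I},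
        Θ ψ φ x = ∫ a in {a : M | A (a, x.1 0) ∈ I},
          (if ha : A (a, x.1 0) ∈ I then
            Real.exp (ψ (consMem A I x a ha)) * φ (consMem A I x a ha) else 0) ∂μ) :
    (∀ ψ : C({z : ℕ → M // ∀ k : ℕ, A (z k, z (k + 1)) ∈ I}, ℝ), AnalyticAt ℝ Θ ψ) ∧
    ∀ ψ β : C({z : ℕ → M // ∀ k : ℕ, A (z k, z (k + 1)) ∈ I}, ℝ),
      HasSum (fun n : ℕ => ((n + 1).factorial : ℝ)⁻¹ •
          ((Θ ψ).comp
            ((ContinuousLinearMap.mul ℝ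
              (C({z : ℕ → M // ∀ k : ℕ, A (z k, z (k + 1)) ∈ I}, ℝ))).flip (β ^ (n + 1)))))
        (Θ (ψ + β) - Θ ψ) := by
  have key : ∀ ψ β, Θ (ψ + β) = (Θ ψ).comp ((ContinuousLinearMap.mul ℝ
      (C({z : ℕ → M // ∀ k : ℕ, A (z k, z (k + 1)) ∈ I}, ℝ))).flip (NormedSpace.exp β)) := by
    intro ψ β
    ext φ x
    simp only [ContinuousLinearMap.comp_apply, ContinuousLinearMap.flip_apply,
      ContinuousLinearMap.mul_apply']
    rw [hΘ, hΘ]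
    congr 1
    funext a
    split_ifs with ha
    · rw [ContinuousMap.mul_apply, ruelle_exp_apply, ContinuousMap.add_apply, Real.exp_add]
      ring
    · rfl
  exact ruelle_abstract Θ key
end

section
/- Let M be a compact metric space, μ a finite Borel measure on M, B = (ℕ → M) with the product topology, and C(B,ℝ) the Banach space of continuous real-valued functions on B with the supremum norm. Let Θ : C(B,ℝ) → (C(B,ℝ) →L C(B,ℝ)) satisfy (Θ(ψ)φ)(x) = ∫_M e^{ψ(ax)} φ(ax) dμ(a). Then for all ψ, β ∈ C(B,ℝ), the series ∑_{n=1}^∞ (1/n!)·[φ ↦ Θ(ψ)(φ·βⁿ)] converges absolutely in the operator norm on C(B,ℝ), its sum equals Θ(ψ+β) − Θ(ψ), and the operator norm of the sum is at most ‖Θ(ψ)‖_op · (e^{‖β‖_∞} − 1). -/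
open MeasureTheory

/-- For the map `Θ : ψ ↦ L_ψ` and all `ψ, β ∈ C(B,ℝ)`, the series
`∑_{n=1}^∞ (1/n!)·[φ ↦ Θ(ψ)(φ·βⁿ)]` converges absolutely in the operator norm, its sum
equals `Θ(ψ+β) − Θ(ψ)`, and the operator norm of the sum is at most
`‖Θ(ψ)‖_op · (e^{‖β‖_∞} − 1)`. -/
theorem ruelle_operator_series_convergence
    {M : Type*} [MetricSpace M] [CompactSpace M] [MeasurableSpace M] [BorelSpace M]
    (μ : Measure M) [IsFiniteMeasure μ]
    (Θ : C(ℕ → M, ℝ) → C(ℕ → M, ℝ) →L[ℝ] C(ℕ → M, ℝ))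
    (hΘ : ∀ ψ φ : C(ℕ → M, ℝ), ∀ x : ℕ → M,
      Θ ψ φ x = ∫ a, Real.exp (ψ (seqCons a x)) * φ (seqCons a x) ∂μ)
    (ψ β : C(ℕ → M, ℝ)) :
    (Summable fun n : ℕ => ‖((n + 1).factorial : ℝ)⁻¹ •
        ((Θ ψ).comp ((ContinuousLinearMap.mul ℝ (C(ℕ → M, ℝ))).flip (β ^ (n + 1))))‖) ∧
    HasSum (fun n : ℕ => ((n + 1).factorial : ℝ)⁻¹ •
        ((Θ ψ).comp ((ContinuousLinearMap.mul ℝ (C(ℕ → M, ℝ))).flip (β ^ (n + 1)))))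
      (Θ (ψ + β) - Θ ψ) ∧
    ‖Θ (ψ + β) - Θ ψ‖ ≤ ‖Θ ψ‖ * (Real.exp ‖β‖ - 1) := by
  set T : C(ℕ → M, ℝ) →L[ℝ] (C(ℕ → M, ℝ) →L[ℝ] C(ℕ → M, ℝ)) :=
    (ContinuousLinearMap.compL ℝ _ _ _ (Θ ψ)).comp (ContinuousLinearMap.mul ℝ (C(ℕ → M, ℝ))).flip
    with hT
  have hTapp : ∀ g φ, T g φ = Θ ψ (φ * g) := fun g φ => rfl
  have hTn : ∀ g, ‖T g‖ ≤ ‖Θ ψ‖ * ‖g‖ := by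
    intro g
    refine ContinuousLinearMap.opNorm_le_bound _ (by positivity) fun φ => ?_
    rw [hTapp]
    calc ‖Θ ψ (φ * g)‖ ≤ ‖Θ ψ‖ * ‖φ * g‖ := (Θ ψ).le_opNorm _
      _ ≤ ‖Θ ψ‖ * (‖φ‖ * ‖g‖) := by gcongr; exact norm_mul_le _ _
      _ = _ := by ring
  have hE : HasSum (fun n : ℕ => ((n.factorial : ℝ)⁻¹) • β ^ n) (NormedSpace.exp β) :=
    NormedSpace.exp_series_hasSum_exp' (𝕂 := ℝ) β
  have hEx : ∀ x, NormedSpace.exp β x = Real.exp (β x) := by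
    intro x
    have h1 := hE.mapL (ContinuousMap.evalCLM ℝ x)
    have h2 := NormedSpace.exp_series_hasSum_exp' (𝕂 := ℝ) (β x)
    rw [← Real.exp_eq_exp_ℝ] at h2
    exact h1.unique (by simpa using h2)
  have hTE : T (NormedSpace.exp β) = Θ (ψ + β) := by
    ext φ x
    rw [hTapp, hΘ, hΘ]
    congr 1
    ext a
    simp only [ContinuousMap.mul_apply, ContinuousMap.add_apply, hEx, Real.exp_add]
    ring
  have hT1 : T 1 = Θ ψ := by
    ext φ x
    rw [hTapp, mul_one]
  have hS : HasSum (fun n : ℕ => ((n + 1).factorial : ℝ)⁻¹ • T (β ^ (n + 1)))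
      (Θ (ψ + β) - Θ ψ) := by
    have h := hE.mapL T
    rw [hTE, ← hasSum_nat_add_iff' 1] at h
    simpa [hT1] using h
  have hR : HasSum (fun n : ℕ => ‖Θ ψ‖ * (((n + 1).factorial : ℝ)⁻¹ * ‖β‖ ^ (n + 1)))
      (‖Θ ψ‖ * (Real.exp ‖β‖ - 1)) := by
    have h2 := NormedSpace.exp_series_hasSum_exp' (𝕂 := ℝ) ‖β‖
    rw [← Real.exp_eq_exp_ℝ, ← hasSum_nat_add_iff' 1] at h2
    exact HasSum.mul_left _ (by simpa using h2)
  have hB : ∀ n : ℕ, ‖((n + 1).factorial : ℝ)⁻¹ • T (β ^ (n + 1))‖ ≤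
      ‖Θ ψ‖ * (((n + 1).factorial : ℝ)⁻¹ * ‖β‖ ^ (n + 1)) := by
    intro n
    rw [← map_smul]
    refine (hTn _).trans ?_
    rw [norm_smul, Real.norm_of_nonneg (by positivity)]
    gcongr
    exact norm_pow_le' _ n.succ_pos
  refine ⟨Summable.of_nonneg_of_le (fun _ => norm_nonneg _) hB hR.summable, hS, ?_⟩
  rw [← hS.tsum_eq]
  exact tsum_of_norm_bounded (E := C(ℕ → M, ℝ) →L[ℝ] C(ℕ → M, ℝ)) hR hB
end
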